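/- Coverage of the posterior predictive given a filtered history. Assume the mixture-of-reference-policies model, fix τ* ∈ 𝒯 with p_ref(τ*) > 0 and Δ > 0, and let h = (a₁, …, a_k) ∈ 𝒜^k be a history whose every action satisfies π^τ(a_j) ≤ e^{−Δ}·π^{τ*}(a_j) for all τ ≠ τ* (with π^{τ*}(a_j) > 0). Let π* be a comparator policy whose support is contained in the support of π^{τ*}. Then C(π*, π_LLM(·|h)) ≤ (1 + e^{−kΔ}/p_ref(τ*)) · C(π*, π^{τ*}). -/

import Mathlib

open Finset

/-- A policy on a finite action set is a probability mass function. -/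
def IsPolicy {A : Type*} [Fintype A] (p : A → ℝ) : Prop :=
  (∀ a, 0 ≤ p a) ∧ ∑ a, p a = 1

/-- The coverage `C(p,q) = Σ_a p(a)² / q(a)`. -/
noncomputable def Cov {A : Type*} [Fintype A] (p q : A → ℝ) : ℝ :=
  ∑ a, p a ^ 2 / q a

/-- Posterior weight of the reference index `τ` given a history `h`. -/
noncomputable def postW {T A : Type*} [Fintype T] (pref : T → ℝ) (pit : T → A → ℝ)
    (h : List A) (τ : T) : ℝ :=
  pref τ * (h.map (pit τ)).prod / ∑ τ', pref τ' * (h.map (pit τ')).prod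

/-- The posterior-predictive policy `π_LLM(· | h)` of the mixture-of-reference-policies model. -/
noncomputable def piLLM {T A : Type*} [Fintype T] (pref : T → ℝ) (pit : T → A → ℝ)
    (h : List A) (a : A) : ℝ :=
  ∑ τ, pit τ a * postW pref pit h τ

/-!
Write `w` for the posterior weight of `τ*`. The mixture dominates `w • π^{τ*}` pointwise, and
coverage is antitone and homogeneous of degree `-1` in its second argument, so passing from
`π^{τ*}` to `π_LLM` costs at most a factor `w⁻¹`. By the margin condition every other likelihood of
the history is at most `e^{-kΔ}` times that of `τ*`, so Bayes' rule gives
`w⁻¹ ≤ 1 + e^{-kΔ} / p_ref(τ*)`.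
-/

lemma prod_map_le_pow_length_mul {ι R : Type*} [CommMonoidWithZero R] [PartialOrder R]
    [ZeroLEOneClass R] [PosMulMono R] {f g : ι → R} {r : R} {l : List ι}
    (hf : ∀ i ∈ l, 0 ≤ f i) (hfg : ∀ i ∈ l, f i ≤ r * g i) :
    (l.map f).prod ≤ r ^ l.length * (l.map g).prod :=
  calc (l.map f).prod ≤ (l.map fun i ↦ r * g i).prod := List.prod_map_le_prod_map₀ _ _ hf hfg
    _ = r ^ l.length * (l.map g).prod := by
        simp only [List.prod_map_mul, List.map_const', List.prod_replicate]

section Coverage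

variable {A : Type*} [Fintype A] {p q q' : A → ℝ}

lemma Cov_nonneg (hq : ∀ a, 0 ≤ q a) : 0 ≤ Cov p q :=
  sum_nonneg fun a _ ↦ div_nonneg (sq_nonneg (p a)) (hq a)

lemma Cov_le_inv_mul_Cov {w : ℝ} (hw : 0 < w) (hq : ∀ a, p a ≠ 0 → 0 < q a)
    (hqq' : ∀ a, p a ≠ 0 → w * q a ≤ q' a) : Cov p q' ≤ w⁻¹ * Cov p q := by
  unfold Cov
  rw [mul_sum]
  refine sum_le_sum fun a _ ↦ ?_
  obtain hpa | hpa := eq_or_ne (p a) 0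
  · simp [hpa]
  · calc p a ^ 2 / q' a ≤ p a ^ 2 / (w * q a) :=
          div_le_div_of_nonneg_left (sq_nonneg _) (mul_pos hw (hq a hpa)) (hqq' a hpa)
      _ = w⁻¹ * (p a ^ 2 / q a) := by ring

end Coverage

section Posterior

variable {A T : Type*} {pref : T → ℝ} {pit : T → A → ℝ} {h : List A} {τs : T}

lemma mul_prod_map_nonneg (hpref : ∀ τ, 0 ≤ pref τ) (hpit : ∀ τ a, 0 ≤ pit τ a) (τ : T) :
    0 ≤ pref τ * (h.map (pit τ)).prod :=
  mul_nonneg (hpref τ) (List.prod_nonneg (List.forall_mem_map.2 fun a _ ↦ hpit τ a))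

variable [Fintype T]

lemma postW_nonneg (hpref : ∀ τ, 0 ≤ pref τ) (hpit : ∀ τ a, 0 ≤ pit τ a) (τ : T) :
    0 ≤ postW pref pit h τ :=
  div_nonneg (mul_prod_map_nonneg hpref hpit τ)
    (sum_nonneg fun τ' _ ↦ mul_prod_map_nonneg hpref hpit τ')

lemma postW_pos (hpref : ∀ τ, 0 ≤ pref τ) (hpit : ∀ τ a, 0 ≤ pit τ a) (hτs : 0 < pref τs)
    (hpos : ∀ a ∈ h, 0 < pit τs a) : 0 < postW pref pit h τs := by
  have hjoint : 0 < pref τs * (h.map (pit τs)).prod :=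
    mul_pos hτs (List.prod_pos (List.forall_mem_map.2 hpos))
  exact div_pos hjoint
    (sum_pos' (fun τ _ ↦ mul_prod_map_nonneg hpref hpit τ) ⟨τs, mem_univ τs, hjoint⟩)

lemma postW_mul_le_piLLM (hpref : ∀ τ, 0 ≤ pref τ) (hpit : ∀ τ a, 0 ≤ pit τ a) (τ : T) (a : A) :
    postW pref pit h τ * pit τ a ≤ piLLM pref pit h a := by
  rw [mul_comm]
  exact single_le_sum (f := fun τ' ↦ pit τ' a * postW pref pit h τ')
    (fun τ' _ ↦ mul_nonneg (hpit τ' a) (postW_nonneg hpref hpit τ')) (mem_univ τ)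

lemma sum_mul_prod_map_le {r : ℝ} (hr : 0 ≤ r) (hpref : ∀ τ, 0 ≤ pref τ)
    (hpit : ∀ τ a, 0 ≤ pit τ a) (hmargin : ∀ τ ≠ τs, ∀ a ∈ h, pit τ a ≤ r * pit τs a) :
    ∑ τ, pref τ * (h.map (pit τ)).prod
      ≤ (pref τs + r ^ h.length * ∑ τ, pref τ) * (h.map (pit τs)).prod := by
  classical
  set L : T → ℝ := fun τ ↦ (h.map (pit τ)).prod
  have hL : 0 ≤ L τs := List.prod_nonneg (List.forall_mem_map.2 fun a _ ↦ hpit τs a)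
  have hratio : ∀ τ ∈ univ.erase τs, pref τ * L τ ≤ pref τ * (r ^ h.length * L τs) :=
    fun τ hτ ↦ mul_le_mul_of_nonneg_left
      (prod_map_le_pow_length_mul (fun a _ ↦ hpit τ a) (hmargin τ (ne_of_mem_erase hτ))) (hpref τ)
  calc ∑ τ, pref τ * L τ
      = pref τs * L τs + ∑ τ ∈ univ.erase τs, pref τ * L τ :=
        (add_sum_erase univ _ (mem_univ τs)).symm
    _ ≤ pref τs * L τs + ∑ τ ∈ univ.erase τs, pref τ * (r ^ h.length * L τs) := by
        gcongr pref τs * L τs + ?_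
        exact sum_le_sum hratio
    _ ≤ pref τs * L τs + ∑ τ, pref τ * (r ^ h.length * L τs) := by
        gcongr pref τs * L τs + ?_
        exact sum_le_univ_sum_of_nonneg fun τ ↦ mul_nonneg (hpref τ) (by positivity)
    _ = (pref τs + r ^ h.length * ∑ τ, pref τ) * L τs := by rw [← sum_mul]; ring

lemma inv_postW_le {r : ℝ} (hr : 0 ≤ r) (hpref : ∀ τ, 0 ≤ pref τ)
    (hpit : ∀ τ a, 0 ≤ pit τ a) (hτs : 0 < pref τs) (hpos : ∀ a ∈ h, 0 < pit τs a)
    (hmargin : ∀ τ ≠ τs, ∀ a ∈ h, pit τ a ≤ r * pit τs a) :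
    (postW pref pit h τs)⁻¹ ≤ 1 + r ^ h.length * (∑ τ, pref τ) / pref τs := by
  have hL : 0 < (h.map (pit τs)).prod := List.prod_pos (List.forall_mem_map.2 hpos)
  rw [postW, inv_div, div_le_iff₀ (mul_pos hτs hL)]
  calc ∑ τ, pref τ * (h.map (pit τ)).prod
      ≤ (pref τs + r ^ h.length * ∑ τ, pref τ) * (h.map (pit τs)).prod :=
        sum_mul_prod_map_le hr hpref hpit hmargin
    _ = (1 + r ^ h.length * (∑ τ, pref τ) / pref τs) * (pref τs * (h.map (pit τs)).prod) := by
        field_simp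

end Posterior

theorem stmt16_general {A : Type*} [Fintype A] {T : Type*} [Fintype T]
    {pref : T → ℝ} (hpref : ∀ τ, 0 ≤ pref τ) {pit : T → A → ℝ} (hpit : ∀ τ a, 0 ≤ pit τ a)
    {τs : T} (hτs : 0 < pref τs) {r : ℝ} (hr : 0 ≤ r) {h : List A}
    (hpos : ∀ a ∈ h, 0 < pit τs a) (hmargin : ∀ τ ≠ τs, ∀ a ∈ h, pit τ a ≤ r * pit τs a)
    {p : A → ℝ} (hsupp : ∀ a, p a ≠ 0 → 0 < pit τs a) :
    Cov p (piLLM pref pit h)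
      ≤ (1 + r ^ h.length * (∑ τ, pref τ) / pref τs) * Cov p (pit τs) :=
  calc Cov p (piLLM pref pit h)
      ≤ (postW pref pit h τs)⁻¹ * Cov p (pit τs) :=
        Cov_le_inv_mul_Cov (postW_pos hpref hpit hτs hpos) hsupp
          fun a _ ↦ postW_mul_le_piLLM hpref hpit τs a
    _ ≤ (1 + r ^ h.length * (∑ τ, pref τ) / pref τs) * Cov p (pit τs) :=
        mul_le_mul_of_nonneg_right (inv_postW_le hr hpref hpit hτs hpos hmargin)
          (Cov_nonneg (hpit τs))

/-- coverage of the posterior predictive given a filtered history.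
If every action of the history `h` (of length `k`) satisfies the margin condition
`π^τ(a_j) ≤ e^{−Δ}·π^{τ*}(a_j)` for all `τ ≠ τ*` (with `π^{τ*}(a_j) > 0`), and the
support of `π*` is contained in that of `π^{τ*}`, then
`C(π*, π_LLM(·|h)) ≤ (1 + e^{−kΔ}/p_ref(τ*)) · C(π*, π^{τ*})`. -/
theorem stmt16 {A : Type*} [Fintype A] {T : Type*} [Fintype T]
    (pref : T → ℝ) (hpref0 : ∀ τ, 0 < pref τ) (hpref1 : ∑ τ, pref τ = 1)
    (pit : T → A → ℝ) (hpit : ∀ τ, IsPolicy (pit τ))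
    (τs : T) (Δ : ℝ) (hΔ : 0 < Δ)
    (h : List A)
    (hmargin : ∀ a ∈ h, 0 < pit τs a ∧
      ∀ τ, τ ≠ τs → pit τ a ≤ Real.exp (-Δ) * pit τs a)
    (πstar : A → ℝ) (hπstar : IsPolicy πstar)
    (hsupp : ∀ a, 0 < πstar a → 0 < pit τs a) :
    Cov πstar (piLLM pref pit h)
      ≤ (1 + Real.exp (-(h.length : ℝ) * Δ) / pref τs) * Cov πstar (pit τs) := by
  simpa only [neg_mul_comm, Real.exp_nat_mul, hpref1, mul_one] using
    stmt16_general (fun τ ↦ (hpref0 τ).le) (fun τ ↦ (hpit τ).1) (hpref0 τs) (Real.exp_nonneg (-Δ))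
      (fun a ha ↦ (hmargin a ha).1) (fun τ hτ a ha ↦ (hmargin a ha).2 τ hτ)
      (fun a ha ↦ hsupp a ((hπstar.1 a).lt_of_ne' ha))
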